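/- Let n ≥ 1, let p, q : {1,…,n} → ℝ≥0, and let 0 ≤ Δ ≤ n. Then for every M ⊆ {1,…,n} with |M| ≥ Δ, OPT(Δ) ≤ f(M) ≤ 2·OPT(Δ); i.e. the optimal pair of schedules agreeing on the positions of all jobs in M is a feasible 2-approximate solution to RecSMSP. -/

import Mathlib

open Finset

/-- Cost of a schedule `σ` (position `i`, 0-indexed, has weight `n - i`,
i.e. position `i+1` in 1-indexed notation has weight `n + 1 - (i+1)`). -/
noncomputable def cost (n : ℕ) (w : Fin n → ℝ) (σ : Equiv.Perm (Fin n)) : ℝ :=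
  ∑ i : Fin n, ((n : ℝ) - ((i : ℕ) : ℝ)) * w (σ i)

/-- `f(M)`: minimal combined cost over pairs of schedules agreeing on the
positions of all jobs in `M`. -/
noncomputable def fval (n : ℕ) (p q : Fin n → ℝ) (M : Finset (Fin n)) : ℝ :=
  sInf {v : ℝ | ∃ σ τ : Equiv.Perm (Fin n),
    (∀ j ∈ M, σ.symm j = τ.symm j) ∧ v = cost n p σ + cost n q τ}

/-- `OPT(Δ)`: optimal value of the recoverable robust single machine
scheduling problem. -/
noncomputable def OPT (n : ℕ) (p q : Fin n → ℝ) (Δ : ℕ) : ℝ :=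
  sInf {v : ℝ | ∃ σ τ : Equiv.Perm (Fin n),
    Δ ≤ (Finset.univ.filter (fun j => σ.symm j = τ.symm j)).card ∧
    v = cost n p σ + cost n q τ}

/-- Value of (UB-SMSP): both stages forced identical. -/
noncomputable def UBval (n : ℕ) (p q : Fin n → ℝ) : ℝ :=
  sInf {v : ℝ | ∃ σ : Equiv.Perm (Fin n), v = cost n (fun j => p j + q j) σ}

/-- Value of (LB-SMSP): the two stages optimised independently. -/
noncomputable def LBval (n : ℕ) (p q : Fin n → ℝ) : ℝ :=
  sInf {v : ℝ | ∃ σ : Equiv.Perm (Fin n), v = cost n p σ} +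
  sInf {v : ℝ | ∃ τ : Equiv.Perm (Fin n), v = cost n q τ}

lemma cost_eq (n : ℕ) (w : Fin n → ℝ) (σ : Equiv.Perm (Fin n)) :
    cost n w σ = ∑ j : Fin n, ((n : ℝ) - ((σ.symm j : ℕ) : ℝ)) * w j := by
  unfold cost
  rw [← Equiv.sum_comp σ (fun j => ((n : ℝ) - ((σ.symm j : ℕ) : ℝ)) * w j)]
  simp

lemma cost_nonneg (n : ℕ) (w : Fin n → ℝ) (hw : ∀ j, 0 ≤ w j) (σ : Equiv.Perm (Fin n)) :
    0 ≤ cost n w σ := by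
  unfold cost
  refine Finset.sum_nonneg fun i _ => mul_nonneg ?_ (hw _)
  have : ((i : ℕ) : ℝ) ≤ n := by exact_mod_cast i.2.le
  linarith

/-- Merging two schedules at most doubles each position weight. -/
lemma exists_merge (n : ℕ) (σ τ : Equiv.Perm (Fin n)) :
    ∃ π : Equiv.Perm (Fin n), ∀ j, n - (π.symm j : ℕ) ≤
      2 * (n - (max (σ.symm j) (τ.symm j) : Fin n)) := by
  set m : Fin n → Fin n := fun j => max (σ.symm j) (τ.symm j) with hm
  refine ⟨Tuple.sort m, fun j => ?_⟩
  have hmono := Tuple.monotone_sort m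
  set π := Tuple.sort m with hπ
  have hsub : (Finset.Ici (π.symm j)).image π ⊆
      (Finset.Ici (m j)).image σ ∪ (Finset.Ici (m j)).image τ := by
    intro x hx
    obtain ⟨i, hi, rfl⟩ := Finset.mem_image.1 hx
    have h1 : m j ≤ m (π i) := by
      have := hmono (Finset.mem_Ici.1 hi)
      simpa using this
    rw [Finset.mem_union, Finset.mem_image, Finset.mem_image]
    rcases le_max_iff.1 h1 with h | h
    · exact Or.inl ⟨σ.symm (π i), Finset.mem_Ici.2 h, by simp⟩
    · exact Or.inr ⟨τ.symm (π i), Finset.mem_Ici.2 h, by simp⟩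
  have h := (Finset.card_le_card hsub).trans (Finset.card_union_le _ _)
  rw [Finset.card_image_of_injective _ π.injective, Finset.card_image_of_injective _ σ.injective,
    Finset.card_image_of_injective _ τ.injective, Fin.card_Ici, Fin.card_Ici] at h
  change n - (π.symm j : ℕ) ≤ 2 * (n - (m j : ℕ))
  omega

lemma cost_le_two (n : ℕ) (w : Fin n → ℝ) (hw : ∀ j, 0 ≤ w j) (π σ : Equiv.Perm (Fin n))
    (h : ∀ j, n - (π.symm j : ℕ) ≤ 2 * (n - (σ.symm j : ℕ))) :
    cost n w π ≤ 2 * cost n w σ := by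
  rw [cost_eq, cost_eq, Finset.mul_sum]
  refine Finset.sum_le_sum fun j _ => ?_
  rw [← mul_assoc]
  refine mul_le_mul_of_nonneg_right ?_ (hw j)
  have h1 := h j
  have h2 := (π.symm j).2
  have h3 := (σ.symm j).2
  have h4 : n + 2 * (σ.symm j : ℕ) ≤ 2 * n + (π.symm j : ℕ) := by omega
  have h5 : (n : ℝ) + 2 * ((σ.symm j : ℕ) : ℝ) ≤ 2 * n + ((π.symm j : ℕ) : ℝ) := by
    exact_mod_cast h4
  linarith

/-- Corollary 3: for any `M` with `|M| ≥ Δ`, the optimal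
pair of schedules agreeing on the positions of all jobs of `M` is a feasible
2-approximate solution to (RecSMSP): `OPT(Δ) ≤ f(M) ≤ 2·OPT(Δ)`. -/
theorem stmt_7 (n : ℕ) (hn : 1 ≤ n) (p q : Fin n → ℝ)
    (hp : ∀ j, 0 ≤ p j) (hq : ∀ j, 0 ≤ q j) (Δ : ℕ) (hΔ : Δ ≤ n)
    (M : Finset (Fin n)) (hM : Δ ≤ M.card) :
    OPT n p q Δ ≤ fval n p q M ∧ fval n p q M ≤ 2 * OPT n p q Δ := by
  have hbdd : ∀ P : Equiv.Perm (Fin n) → Equiv.Perm (Fin n) → Prop,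
      BddBelow {v : ℝ | ∃ σ τ : Equiv.Perm (Fin n), P σ τ ∧ v = cost n p σ + cost n q τ} := by
    rintro P
    refine ⟨0, ?_⟩
    rintro v ⟨σ, τ, -, rfl⟩
    exact add_nonneg (cost_nonneg n p hp σ) (cost_nonneg n q hq τ)
  constructor
  · unfold OPT fval
    refine csInf_le_csInf (hbdd _) ⟨_, 1, 1, fun _ _ => rfl, rfl⟩ ?_
    rintro v ⟨σ, τ, h, rfl⟩
    refine ⟨σ, τ, hM.trans (Finset.card_le_card fun j hj => ?_), rfl⟩
    simpa using h j hj
  · have key : fval n p q M / 2 ≤ OPT n p q Δ := by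
      unfold OPT
      refine le_csInf ⟨_, 1, 1, by simpa using hΔ, rfl⟩ ?_
      rintro v ⟨σ, τ, -, rfl⟩
      obtain ⟨π, hπ⟩ := exists_merge n σ τ
      have h1 : fval n p q M ≤ cost n p π + cost n q π :=
        csInf_le (hbdd _) ⟨π, π, fun _ _ => rfl, rfl⟩
      have h2 := cost_le_two n p hp π σ fun j => (hπ j).trans (by
        have : (σ.symm j : ℕ) ≤ (max (σ.symm j) (τ.symm j) : Fin n) :=
          Fin.le_def.1 (le_max_left _ _)
        omega)
      have h3 := cost_le_two n q hq π τ fun j => (hπ j).trans (by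
        have : (τ.symm j : ℕ) ≤ (max (σ.symm j) (τ.symm j) : Fin n) :=
          Fin.le_def.1 (le_max_right _ _)
        omega)
      linarith
    linarith
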